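/- Let M ∈ ℝ^{m×n} be entrywise nonnegative admitting a separable factorization M = UV with U ∈ ℝ^{m×r}, V ∈ ℝ^{r×n} entrywise nonnegative, and suppose conv(θ(M)) has exactly r extreme points, each equal to θ(M_{:i}) for exactly one column index i (the r vertices of θ(M) are non-repeated). Then the preprocessed matrix P(M) has exactly r nonzero columns, and letting S be the m×r submatrix formed by these nonzero columns, there exists an entrywise nonnegative matrix R with M = SR (equivalently conv(θ(M)) ⊆ conv(θ(S))). -/

import Mathlib

open Matrix BigOperators

/-- The column `j` of `M` normalized to unit ℓ₁-norm. -/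
noncomputable def normCol {m n : ℕ} (M : Matrix (Fin m) (Fin n) ℝ) (j : Fin n) : Fin m → ℝ :=
  (∑ i, |M i j|)⁻¹ • fun i => M i j

/-- Column `j` of `M` is nonzero. -/
def colNZ {m n : ℕ} (M : Matrix (Fin m) (Fin n) ℝ) (j : Fin n) : Prop :=
  (fun i => M i j) ≠ 0

/-- `θ(M)`: the set of ℓ₁-normalized nonzero columns of `M`. -/
noncomputable def thetaCols {m n : ℕ} (M : Matrix (Fin m) (Fin n) ℝ) : Set (Fin m → ℝ) :=
  {x | ∃ j, colNZ M j ∧ x = normCol M j}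

/-- The nonnegative rank of `M`. -/
noncomputable def nnRank {m n : ℕ} (M : Matrix (Fin m) (Fin n) ℝ) : ℕ :=
  sInf {r : ℕ | ∃ U : Matrix (Fin m) (Fin r) ℝ, ∃ V : Matrix (Fin r) (Fin n) ℝ,
    (∀ i j, 0 ≤ U i j) ∧ (∀ i j, 0 ≤ V i j) ∧ M = U * V}

/-- The squared Frobenius norm. -/
noncomputable def frobSq {m n : ℕ} (A : Matrix (Fin m) (Fin n) ℝ) : ℝ :=
  ∑ i, ∑ j, (A i j) ^ 2

/-- Feasibility for problem (tigrel): `B ≥ 0`, zero diagonal, `MB ≤ M` entrywise. -/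
def TigrelFeasible {m n : ℕ} (M : Matrix (Fin m) (Fin n) ℝ)
    (B : Matrix (Fin n) (Fin n) ℝ) : Prop :=
  (∀ i j, 0 ≤ B i j) ∧ (∀ i, B i i = 0) ∧ ∀ i j, (M * B) i j ≤ M i j

/-- Optimality for problem (tigrel): feasible and minimizes `‖M - MB‖_F²`. -/
def TigrelOpt {m n : ℕ} (M : Matrix (Fin m) (Fin n) ℝ)
    (B : Matrix (Fin n) (Fin n) ℝ) : Prop :=
  TigrelFeasible M B ∧
    ∀ B', TigrelFeasible M B' → frobSq (M - M * B) ≤ frobSq (M - M * B')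

/-- A monomial matrix: permutation of a diagonal matrix with positive diagonal. -/
def IsMonomial {k : ℕ} (P : Matrix (Fin k) (Fin k) ℝ) : Prop :=
  ∃ (σ : Equiv.Perm (Fin k)) (d : Fin k → ℝ), (∀ i, 0 < d i) ∧
    ∀ i j, P i j = if i = σ j then d j else 0

/-- Every extreme point of `conv(θ(M))` equals `θ(M_{:j})` for exactly one column `j`. -/
def NonRepeatedVertices {m n : ℕ} (M : Matrix (Fin m) (Fin n) ℝ) : Prop :=
  ∀ x ∈ Set.extremePoints ℝ (convexHull ℝ (thetaCols M)),
    ∃! j : Fin n, colNZ M j ∧ x = normCol M j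

/-- Uniqueness of size-`r` exact NMF up to permutation and scaling. -/
def UniqueNMF {m n : ℕ} (r : ℕ) (M : Matrix (Fin m) (Fin n) ℝ) : Prop :=
  ∀ (U₁ U₂ : Matrix (Fin m) (Fin r) ℝ) (V₁ V₂ : Matrix (Fin r) (Fin n) ℝ),
    (∀ i j, 0 ≤ U₁ i j) → (∀ i j, 0 ≤ V₁ i j) →
    (∀ i j, 0 ≤ U₂ i j) → (∀ i j, 0 ≤ V₂ i j) →
    M = U₁ * V₁ → M = U₂ * V₂ →
    ∃ P : Matrix (Fin r) (Fin r) ℝ, IsMonomial P ∧ U₂ = U₁ * P ∧ V₂ = P⁻¹ * V₁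

/-- Separability of a factorization, expressed as a property of the right factor `V`. -/
def SeparableFactor {r n : ℕ} (V : Matrix (Fin r) (Fin n) ℝ) : Prop :=
  ∀ i : Fin r, ∃ j : Fin n, V i j ≠ 0 ∧ ∀ i' : Fin r, i' ≠ i → V i' j = 0

/-- The Frobenius norm. -/
noncomputable def frobNorm {m n : ℕ} (A : Matrix (Fin m) (Fin n) ℝ) : ℝ :=
  Real.sqrt (∑ i, ∑ j, (A i j) ^ 2)

/-- The Euclidean (ℓ₂) norm of a vector. -/
noncomputable def vecNorm2 {n : ℕ} (x : Fin n → ℝ) : ℝ :=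
  Real.sqrt (∑ i, (x i) ^ 2)

/-- The spectral (operator 2-) norm of a matrix. -/
noncomputable def specNorm {m n : ℕ} (A : Matrix (Fin m) (Fin n) ℝ) : ℝ :=
  sSup {c : ℝ | ∃ x : Fin n → ℝ, vecNorm2 x ≤ 1 ∧ c = vecNorm2 (A.mulVec x)}

theorem aux_scale {m n : ℕ} (M : Matrix (Fin m) (Fin n) ℝ) (j : Fin n) (p : Fin m) :
    (∑ i, |M i j|) * normCol M j p = M p j := by
  unfold normCol
  by_cases h : (∑ i, |M i j|) = 0
  · have := (Finset.sum_eq_zero_iff_of_nonneg (fun i _ => abs_nonneg (M i j))).1 h p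
      (Finset.mem_univ _)
    rw [h, zero_mul]
    exact (abs_eq_zero.1 this).symm
  · simp only [Pi.smul_apply, smul_eq_mul]
    rw [← mul_assoc, mul_inv_cancel₀ h, one_mul]

theorem aux_pos {m n : ℕ} (M : Matrix (Fin m) (Fin n) ℝ) (j : Fin n) (h : colNZ M j) :
    0 < ∑ i, |M i j| := by
  obtain ⟨p, hp⟩ := Function.ne_iff.1 h
  exact Finset.sum_pos' (fun i _ => abs_nonneg _) ⟨p, Finset.mem_univ _, abs_pos.2 hp⟩

theorem aux_finite {m n : ℕ} (M : Matrix (Fin m) (Fin n) ℝ) : (thetaCols M).Finite := by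
  refine (Set.finite_range (normCol M)).subset ?_
  rintro x ⟨j, -, rfl⟩
  exact ⟨j, rfl⟩

theorem aux_hull {m n : ℕ} (M : Matrix (Fin m) (Fin n) ℝ) :
    convexHull ℝ (Set.extremePoints ℝ (convexHull ℝ (thetaCols M)))
      = convexHull ℝ (thetaCols M) := by
  have h1 := closure_convexHull_extremePoints ((aux_finite M).isCompact_convexHull ℝ)
    (convex_convexHull ℝ (thetaCols M))
  have h2 : (Set.extremePoints ℝ (convexHull ℝ (thetaCols M))).Finite :=
    (aux_finite M).subset extremePoints_convexHull_subset
  rwa [(h2.isClosed_convexHull ℝ).closure_eq] at h1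

/-- columns of `M` are in the cone of the vertices -/
theorem aux_cone {m n r : ℕ} (M : Matrix (Fin m) (Fin n) ℝ) (f : Fin r → Fin n)
    (hf : ∀ k, colNZ M (f k))
    (hE : ∀ x ∈ Set.extremePoints ℝ (convexHull ℝ (thetaCols M)), ∃ k, x = normCol M (f k)) :
    ∃ W : Matrix (Fin r) (Fin n) ℝ, (∀ i j, 0 ≤ W i j) ∧
      ∀ p j, M p j = ∑ k, M p (f k) * W k j := by
  have key : ∀ j, ∃ w : Fin r → ℝ, (∀ k, 0 ≤ w k) ∧ ∀ p, M p j = ∑ k, M p (f k) * w k := by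
    intro j
    by_cases hj : colNZ M j
    · let K : Set (Fin m → ℝ) := {x | ∃ w : Fin r → ℝ, (∀ k, 0 ≤ w k) ∧
        ∀ p, x p = ∑ k, M p (f k) * w k}
      have hK : Convex ℝ K := by
        rintro x ⟨w, hw, hx⟩ y ⟨v, hv, hy⟩ a b ha hb -
        refine ⟨fun k => a * w k + b * v k, fun k => ?_, fun p => ?_⟩
        · have := hw k; have := hv k; positivity
        · simp only [Pi.add_apply, Pi.smul_apply, smul_eq_mul, hx, hy, Finset.mul_sum,
            ← Finset.sum_add_distrib]
          exact Finset.sum_congr rfl fun k _ => by ring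
      have hsub : convexHull ℝ (thetaCols M) ⊆ K := by
        rw [← aux_hull]
        refine convexHull_min ?_ hK
        intro x hx
        obtain ⟨k, rfl⟩ := hE x hx
        refine ⟨Pi.single k (∑ i, |M i (f k)|)⁻¹, fun l => ?_, fun p => ?_⟩
        · by_cases h : l = k
          · subst h; simp only [Pi.single_eq_same]
            have := aux_pos M _ (hf l); positivity
          · simp [h]
        · simp [Pi.single_apply, normCol, mul_comm]
      obtain ⟨w, hw, hx⟩ := hsub (subset_convexHull ℝ _ ⟨j, hj, rfl⟩)
      have hs := aux_pos M j hj
      refine ⟨fun k => (∑ i, |M i j|) * w k, fun k => mul_nonneg hs.le (hw k), fun p => ?_⟩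
      rw [← aux_scale M j p, hx p, Finset.mul_sum]
      exact Finset.sum_congr rfl fun k _ => by ring
    · refine ⟨0, fun _ => le_rfl, fun p => ?_⟩
      simpa using congrFun (not_not.1 hj) p
  choose w hw hx using key
  exact ⟨fun k j => w j k, fun k j => hw j k, fun p j => hx j p⟩

/-- a vertex column is not in the cone of the others -/
theorem aux_vertex {m n : ℕ} (M : Matrix (Fin m) (Fin n) ℝ) (hM : ∀ i j, 0 ≤ M i j)
    (hvert : NonRepeatedVertices M) (j : Fin n) (hj : colNZ M j)
    (hx : normCol M j ∈ Set.extremePoints ℝ (convexHull ℝ (thetaCols M)))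
    (b : Fin n → ℝ) (hb : ∀ l, 0 ≤ b l) (hbj : b j = 0)
    (h : ∀ p, M p j = ∑ l, M p l * b l) : False := by
  classical
  let s : Fin n → ℝ := fun l => ∑ i, |M i l|
  have hs : 0 < s j := aux_pos M j hj
  have hs0 : ∀ l, ¬ colNZ M l → s l = 0 := by
    intro l hl
    refine Finset.sum_eq_zero fun i _ => ?_
    rw [congrFun (not_not.1 hl) i]; simp
  let A : Set (Fin m → ℝ) := {x | ∃ l, l ≠ j ∧ colNZ M l ∧ x = normCol M l}
  have hA : A ⊆ thetaCols M := by
    rintro x ⟨l, -, h1, h2⟩; exact ⟨l, h1, h2⟩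
  let F : Finset (Fin n) := Finset.univ.filter fun l => l ≠ j ∧ colNZ M l
  have hmemA : normCol M j ∈ convexHull ℝ A := by
    have hsum : ∑ l, (s j)⁻¹ * (s l * b l) = 1 := by
      have : ∑ l, s l * b l = s j := by
        simp only [s, Finset.sum_mul]
        rw [Finset.sum_comm]
        refine Finset.sum_congr rfl fun i _ => ?_
        rw [abs_of_nonneg (hM i j), h i]
        exact Finset.sum_congr rfl fun l _ => by rw [abs_of_nonneg (hM i l)]
      rw [← Finset.mul_sum, this, inv_mul_cancel₀ hs.ne']
    have hz : ∀ l ∈ Finset.univ, l ∉ F → s l * b l = 0 := by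
      intro l _ hl
      by_cases h1 : l = j
      · rw [h1, hbj, mul_zero]
      · have : ¬ colNZ M l := fun h2 => hl (by simp [F, h1, h2])
        rw [hs0 l this, zero_mul]
    have hxe : normCol M j = ∑ l ∈ F, ((s j)⁻¹ * (s l * b l)) • normCol M l := by
      rw [Finset.sum_subset (Finset.subset_univ F)
        (fun l hl h2 => by rw [hz l hl h2]; simp)]
      funext p
      simp only [Finset.sum_apply, Pi.smul_apply, smul_eq_mul]
      have e : normCol M j p = (s j)⁻¹ * M p j := by simp [normCol, s]
      rw [e, h p, Finset.mul_sum]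
      refine Finset.sum_congr rfl fun l _ => ?_
      rw [← aux_scale M l p]; ring
    rw [hxe]
    refine (convex_convexHull ℝ A).sum_mem (fun l _ => ?_) ?_ (fun l hl => ?_)
    · have : 0 ≤ s l := Finset.sum_nonneg fun i _ => abs_nonneg _
      have := hb l
      positivity
    · rw [Finset.sum_subset (Finset.subset_univ F)
        (fun l hl h2 => by rw [hz l hl h2]; simp)]
      exact hsum
    · have := (Finset.mem_filter.1 hl).2
      exact subset_convexHull ℝ A ⟨l, this.1, this.2, rfl⟩
  have hext : normCol M j ∈ Set.extremePoints ℝ (convexHull ℝ A) :=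
    inter_extremePoints_subset_extremePoints_of_subset (convexHull_mono hA) ⟨hmemA, hx⟩
  obtain ⟨l, hl, hl2, hl3⟩ := extremePoints_convexHull_subset hext
  exact hl ((hvert _ hx).unique ⟨hl2, hl3⟩ ⟨hj, rfl⟩)

/-- optimality kills non-vertex columns -/
theorem aux_opt {m n : ℕ} (M : Matrix (Fin m) (Fin n) ℝ)
    (B : Matrix (Fin n) (Fin n) ℝ) (hB : TigrelOpt M B) (j : Fin n)
    (b : Fin n → ℝ) (hb : ∀ l, 0 ≤ b l) (hbj : b j = 0)
    (h : ∀ p, M p j = ∑ l, M p l * b l) : ∀ p, (M - M * B) p j = 0 := by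
  classical
  let B' : Matrix (Fin n) (Fin n) ℝ :=
    Matrix.of fun i k => if k = j then b i else B i k
  have e1 : ∀ p, (M * B') p j = M p j := by
    intro p; rw [h p]; simp [Matrix.mul_apply, B']
  have e2 : ∀ p k, k ≠ j → (M * B') p k = (M * B) p k := by
    intro p k hk; simp [Matrix.mul_apply, B', hk]
  obtain ⟨⟨h1, h2, h3⟩, hopt⟩ := hB
  have hfeas : TigrelFeasible M B' := by
    refine ⟨fun i k => ?_, fun i => ?_, fun i k => ?_⟩
    · by_cases hk : k = j <;> simp [B', hk, hb, h1]
    · by_cases hk : i = j <;> simp [B', hk, hbj, h2]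
    · by_cases hk : k = j
      · rw [hk, e1]
      · rw [e2 _ _ hk]; exact h3 i k
  have hle := hopt B' hfeas
  by_contra! hcon
  obtain ⟨p, hp⟩ := hcon
  refine absurd hle (not_le.2 ?_)
  unfold frobSq
  have hterm : ∀ i k, ((M - M * B') i k) ^ 2 ≤ ((M - M * B) i k) ^ 2 := by
    intro i k
    by_cases hk : k = j
    · rw [hk, Matrix.sub_apply, e1, sub_self]; simpa using sq_nonneg _
    · rw [Matrix.sub_apply, e2 _ _ hk, Matrix.sub_apply]
  refine Finset.sum_lt_sum (fun i _ => Finset.sum_le_sum fun k _ => hterm i k)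
    ⟨p, Finset.mem_univ _, Finset.sum_lt_sum (fun k _ => hterm p k) ⟨j, Finset.mem_univ _, ?_⟩⟩
  rw [Matrix.sub_apply M (M * B'), e1, sub_self]
  have := sq_pos_of_ne_zero hp
  simpa using this

/-- Neumann series -/
theorem aux_neumann {m r : ℕ} (A S : Matrix (Fin m) (Fin r) ℝ) (C : Matrix (Fin r) (Fin r) ℝ)
    (hA : ∀ i j, 0 ≤ A i j) (hC : ∀ i j, 0 ≤ C i j) (hS : ∀ i j, 0 ≤ S i j)
    (hSA : S = A - A * C) (hnz : ∀ k, ∃ p, S p k ≠ 0) :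
    ∃ T : Matrix (Fin r) (Fin r) ℝ, (∀ i j, 0 ≤ T i j) ∧ A = S * T := by
  have hCk : ∀ N i j, 0 ≤ (C ^ N) i j := by
    intro N
    induction N with
    | zero => intro i j; rw [pow_zero, Matrix.one_apply]; split_ifs <;> norm_num
    | succ N ih =>
      intro i j
      rw [pow_succ, Matrix.mul_apply]
      exact Finset.sum_nonneg fun k _ => mul_nonneg (ih i k) (hC k j)
  have htel : ∀ N, S * (∑ i ∈ Finset.range N, C ^ i) = A - A * C ^ N := by
    intro N
    induction N with
    | zero => simp
    | succ N ih =>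
      rw [Finset.sum_range_succ, Matrix.mul_add, ih, hSA, Matrix.sub_mul, Matrix.mul_assoc, pow_succ' C N]
      abel
  have hsumm : ∀ l j, Summable fun N => (C ^ N) l j := by
    intro l j
    obtain ⟨p, hp⟩ := hnz l
    have hp' : 0 < S p l := lt_of_le_of_ne (hS p l) (Ne.symm hp)
    refine summable_of_sum_range_le (c := A p j / S p l) (fun N => hCk N l j) fun N => ?_
    rw [le_div_iff₀ hp']
    have h1 := congrFun (congrFun (htel N) p) j
    rw [Matrix.mul_apply, Matrix.sub_apply, Matrix.mul_apply] at h1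
    have h2 : 0 ≤ ∑ k, A p k * (C ^ N) k j :=
      Finset.sum_nonneg fun k _ => mul_nonneg (hA p k) (hCk N k j)
    have h3 : S p l * (∑ i ∈ Finset.range N, C ^ i) l j
        ≤ ∑ k, S p k * (∑ i ∈ Finset.range N, C ^ i) k j := by
      refine Finset.single_le_sum (f := fun k => S p k * (∑ i ∈ Finset.range N, C ^ i) k j)
        (fun k _ => mul_nonneg (hS p k) ?_) (Finset.mem_univ l)
      rw [Matrix.sum_apply]
      exact Finset.sum_nonneg fun i _ => hCk i k j
    rw [Matrix.sum_apply] at h3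
    linarith
  refine ⟨Matrix.of fun l j => ∑' N, (C ^ N) l j, fun l j => tsum_nonneg fun N => hCk N l j, ?_⟩
  ext p j
  have t1 : Filter.Tendsto (fun N => (S * (∑ i ∈ Finset.range N, C ^ i)) p j) Filter.atTop
      (nhds ((S * (Matrix.of fun l j => ∑' N, (C ^ N) l j)) p j)) := by
    simp only [Matrix.mul_apply, Matrix.sum_apply]
    exact tendsto_finsetSum _ fun k _ =>
      ((hsumm k j).hasSum.tendsto_sum_nat).const_mul _
  have t2 : Filter.Tendsto (fun N => (S * (∑ i ∈ Finset.range N, C ^ i)) p j) Filter.atTop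
      (nhds (A p j)) := by
    simp only [htel]
    simp only [Matrix.sub_apply, Matrix.mul_apply]
    have : Filter.Tendsto (fun N => ∑ k, A p k * (C ^ N) k j) Filter.atTop
        (nhds (∑ k, A p k * 0)) :=
      tendsto_finsetSum _ fun k _ => ((hsumm k j).tendsto_atTop_zero).const_mul _
    simpa using this.const_sub (A p j)
  exact tendsto_nhds_unique t2 t1

/-- if `M` admits a separable factorization of size `r` and `conv(θ(M))`
has exactly `r` non-repeated vertices, then `P(M)` has exactly `r` nonzero columns
and the submatrix `S` they form satisfies `M = SR` for some `R ≥ 0`. -/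
theorem stmt15 {m n r : ℕ} (M : Matrix (Fin m) (Fin n) ℝ) (hM : ∀ i j, 0 ≤ M i j)
    (U : Matrix (Fin m) (Fin r) ℝ) (V : Matrix (Fin r) (Fin n) ℝ)
    (hU : ∀ i j, 0 ≤ U i j) (hV : ∀ i j, 0 ≤ V i j)
    (hfact : M = U * V) (hsep : SeparableFactor V)
    (hcard : (Set.extremePoints ℝ (convexHull ℝ (thetaCols M))).ncard = r)
    (hvert : NonRepeatedVertices M)
    (B : Matrix (Fin n) (Fin n) ℝ) (hB : TigrelOpt M B) :
    ∃ f : Fin r → Fin n, Function.Injective f ∧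
      (∀ k, colNZ (M * (1 - B)) (f k)) ∧
      (∀ j, colNZ (M * (1 - B)) j → ∃ k, f k = j) ∧
      ∃ R : Matrix (Fin r) (Fin n) ℝ, (∀ i j, 0 ≤ R i j) ∧
        M = (Matrix.of fun p k => (M * (1 - B) : Matrix (Fin m) (Fin n) ℝ) p (f k)) * R := by
  classical
  set E := Set.extremePoints ℝ (convexHull ℝ (thetaCols M)) with hEdef
  have hEfin : E.Finite := (aux_finite M).subset extremePoints_convexHull_subset
  have : Finite E := hEfin
  have e : Fin r ≃ E := (Finite.equivFinOfCardEq (by rw [← hcard]; rfl)).symm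
  have hex : ∀ k, ∃ j, colNZ M j ∧ (e k : Fin m → ℝ) = normCol M j :=
    fun k => (hvert _ (e k).2).exists
  choose f hf1 hf2 using hex
  have hinj : Function.Injective f := by
    intro a b hab
    apply e.injective
    apply Subtype.ext
    rw [hf2, hf2, hab]
  obtain ⟨W, hW, hMW⟩ := aux_cone M f hf1 (fun x hx =>
    ⟨e.symm ⟨x, hx⟩, by rw [← hf2]; simp⟩)
  have hP : M * (1 - B) = M - M * B := by rw [Matrix.mul_sub, Matrix.mul_one]
  have hBf := hB.1
  obtain ⟨hB1, hB2, hB3⟩ := hBf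
  rw [hP]
  have hnz : ∀ k, colNZ (M - M * B) (f k) := by
    intro k hk
    refine aux_vertex M hM hvert (f k) (hf1 k) (by rw [← hf2]; exact (e k).2)
      (fun l => B l (f k)) (fun l => hB1 l _) (hB2 _) fun p => ?_
    have := congrFun hk p
    simp only [Matrix.sub_apply, Matrix.mul_apply, Pi.zero_apply] at this
    linarith
  refine ⟨f, hinj, hnz, ?_, ?_⟩
  · intro j hj
    by_contra! hcon
    apply hj
    funext p
    refine aux_opt M B hB j (fun l => ∑ k, if f k = l then W k j else 0)
      (fun l => Finset.sum_nonneg fun k _ => ?_)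
      (Finset.sum_eq_zero fun k _ => by simp [hcon k]) (fun p => ?_) p
    · split_ifs
      · exact hW k j
      · exact le_rfl
    · rw [hMW p j]
      simp only [Finset.mul_sum]
      rw [Finset.sum_comm]
      simp
  · have hMW' : M = M.submatrix id f * W := by
      ext p j; rw [hMW p j, Matrix.mul_apply]; rfl
    obtain ⟨T, hT, hAT⟩ := aux_neumann (M.submatrix id f)
      (Matrix.of fun p k => (M - M * B) p (f k)) (W * B.submatrix id f)
      (fun i j => hM _ _)
      (fun i j => by
        rw [Matrix.mul_apply]
        exact Finset.sum_nonneg fun k _ => mul_nonneg (hW _ _) (hB1 _ _))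
      (fun i j => sub_nonneg.2 (hB3 _ _))
      (by
        rw [← Matrix.mul_assoc, ← hMW']
        ext p k
        rfl)
      (fun k => Function.ne_iff.1 (hnz k))
    refine ⟨T * W, fun i j => by
      rw [Matrix.mul_apply]
      exact Finset.sum_nonneg fun k _ => mul_nonneg (hT _ _) (hW _ _), ?_⟩
    rw [← Matrix.mul_assoc, ← hAT]
    exact hMW'
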